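/- Let M be a modular lattice and let a ≤ b be elements of M. Then any two finite maximal chains from a to b have equal length; precisely, if a = x₀ ⋖ x₁ ⋖ … ⋖ x_k = b and a = y₀ ⋖ y₁ ⋖ … ⋖ y_m = b are two chains in M in which every step is a covering relation, then k = m (the Jordan–Hölder–Dedekind chain condition holds in every modular lattice). -/

import Mathlib

/-- The Jordan–Hölder structure on a weakly lower modular lattice: `IsMaximal` is the covering
relation, so that composition series are exactly the finite chains of covering steps. It is not an
instance because modular lattices already carry this structure in Mathlib. -/
abbrev jordanHolderLatticeOfWeakLowerModular (M : Type*) [Lattice M]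
    [IsWeakLowerModularLattice M] : JordanHolderLattice M where
  IsMaximal := (· ⋖ ·)
  lt_of_isMaximal := CovBy.lt
  sup_eq_of_isMaximal hxz hyz := hxz.wcovBy.sup_eq hyz.wcovBy
  isMaximal_inf_left_of_isMaximal_sup := inf_covBy_of_covBy_sup_of_covBy_sup_left

theorem jordan_holder_dedekind_modular_lattice_general {M : Type*} [Lattice M]
    [IsWeakLowerModularLattice M] {k m : ℕ} {x : Fin (k + 1) → M} {y : Fin (m + 1) → M}
    (head_eq : x 0 = y 0) (last_eq : x (Fin.last k) = y (Fin.last m))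
    (hx : ∀ i : Fin k, x i.castSucc ⋖ x i.succ)
    (hy : ∀ i : Fin m, y i.castSucc ⋖ y i.succ) :
    k = m := by
  let _ := jordanHolderLatticeOfWeakLowerModular M
  let s : CompositionSeries M := { length := k, toFun := x, step := hx }
  let t : CompositionSeries M := { length := m, toFun := y, step := hy }
  have equivalent : s.Equivalent t := CompositionSeries.jordan_holder s t head_eq last_eq
  exact equivalent.length_eq

/-- Jordan–Hölder–Dedekind chain condition in a modular lattice: any two finite
maximal chains (chains in which every step is a covering relation) from `a` to `b`
have equal length. -/
theorem jordan_holder_dedekind_modular_lattice {M : Type*} [Lattice M]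
    [IsModularLattice M] (a b : M) (hab : a ≤ b) (k m : ℕ)
    (x : Fin (k + 1) → M) (y : Fin (m + 1) → M)
    (hx0 : x 0 = a) (hxl : x (Fin.last k) = b)
    (hy0 : y 0 = a) (hyl : y (Fin.last m) = b)
    (hx : ∀ i : Fin k, x i.castSucc ⋖ x i.succ)
    (hy : ∀ i : Fin m, y i.castSucc ⋖ y i.succ) :
    k = m :=
  jordan_holder_dedekind_modular_lattice_general (hx0.trans hy0.symm) (hxl.trans hyl.symm) hx hy
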